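/- Let f₁,…,f_M : ℝ^d → ℝ and 0 ≤ O < M. Define φ(θ) as the (O+1)-st largest value among f₁(θ),…,f_M(θ), and φ_S(θ) = max_{m ∈ S} f_m(θ) for S ⊆ {1,…,M} with |S| = M − O. If S⋆ attains the minimum of inf φ_S over all such subsets, and this minimum is attained by φ_{S⋆} at some point, then every global minimizer of φ_{S⋆} is a global minimizer of φ. -/

import Mathlib

/-- The (O+1)-st largest component of `z`. -/
noncomputable def pctl {M : ℕ} (O : ℕ) (hO : O < M) (z : Fin M → ℝ) : ℝ :=
  z (Tuple.sort z ⟨M - 1 - O, by omega⟩)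

/-!
The `(O + 1)`-st largest of `M` numbers is their `(M - O)`-th smallest, hence equals the minimum of
`max_{m ∈ S} z m` over the subsets `S` of cardinality `M - O`. Thus `φ = min_S φ_S` pointwise.
If `θ⋆` minimizes `φ_{S⋆}` and `S` realizes `φ(θ) = φ_S(θ)`, then
`φ(θ⋆) ≤ φ_{S⋆}(θ⋆) = inf φ_{S⋆} ≤ inf φ_S ≤ φ_S(θ) = φ(θ)`.
-/

section OrderStatistic

open Finset

variable {α : Type*} {n : ℕ} {f : Fin n → α} {σ : Equiv.Perm (Fin n)}

theorem lt_card_le_iff_apply_perm_le [Preorder α] [DecidableLE α] (hσ : Monotone (f ∘ σ))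
    {j : Fin n} {a : α} : j < #{i | f i ≤ a} ↔ f (σ j) ≤ a := by
  have card_comp_perm : #{i | (f ∘ σ) i ≤ a} = #{i | f i ≤ a} := card_equiv σ (by simp)
  rw [← card_comp_perm]
  exact Tuple.lt_card_le_iff_apply_le_of_monotone hσ

theorem isLeast_sup'_of_monotone_comp_perm [SemilatticeSup α] (hσ : Monotone (f ∘ σ))
    (j : Fin n) :
    IsLeast {a | ∃ (S : Finset (Fin n)) (hS : S.Nonempty), #S = j + 1 ∧ S.sup' hS f = a}
      (f (σ j)) := by
  classical
  have apply_le_sup' (S : Finset (Fin n)) (hS : S.Nonempty) (hcard : #S = j + 1) :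
      f (σ j) ≤ S.sup' hS f := by
    have hsub : S ⊆ ({i | f i ≤ S.sup' hS f} : Finset (Fin n)) := fun i hi =>
      mem_filter.mpr ⟨mem_univ i, le_sup' f hi⟩
    have hlt : (j : ℕ) < #S := by lia
    exact (lt_card_le_iff_apply_perm_le hσ).mp (hlt.trans_le (card_le_card hsub))
  constructor
  · obtain ⟨S, hsub, hcard⟩ := exists_subset_card_eq
      (Nat.succ_le_of_lt ((lt_card_le_iff_apply_perm_le hσ).mpr (le_refl (f (σ j)))))
    have hS : S.Nonempty := card_pos.mp (by lia)
    have sup'_le_apply : S.sup' hS f ≤ f (σ j) :=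
      sup'_le hS f fun i hi => (mem_filter.mp (hsub hi)).2
    exact ⟨S, hS, hcard, sup'_le_apply.antisymm (apply_le_sup' S hS hcard)⟩
  · rintro _ ⟨S, hS, hcard, rfl⟩
    exact apply_le_sup' S hS hcard

end OrderStatistic

theorem isLeast_pctl {M O : ℕ} (hO : O < M) (z : Fin M → ℝ) :
    IsLeast {a | ∃ (S : Finset (Fin M)) (hS : S.Nonempty), S.card = M - O ∧ S.sup' hS z = a}
      (pctl O hO z) := by
  have hrank : M - 1 - O + 1 = M - O := by lia
  simpa only [pctl, hrank] using
    isLeast_sup'_of_monotone_comp_perm (Tuple.monotone_sort z) ⟨M - 1 - O, by lia⟩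

theorem stmt_4_general {Θ : Type*} {M O : ℕ} (hO : O < M) (fs : Fin M → Θ → ℝ)
    (Sstar : Finset (Fin M)) (hne : Sstar.Nonempty) (hcard : Sstar.card = M - O)
    (hmin : ∀ (S : Finset (Fin M)) (hS : S.Nonempty), S.card = M - O →
      (⨅ θ : Θ, ((Sstar.sup' hne (fun m => fs m θ) : ℝ) : EReal)) ≤
        ⨅ θ : Θ, ((S.sup' hS (fun m => fs m θ) : ℝ) : EReal))
    (θstar : Θ)
    (hstar : ∀ θ, Sstar.sup' hne (fun m => fs m θstar) ≤ Sstar.sup' hne (fun m => fs m θ))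
    (θ : Θ) : pctl O hO (fun m => fs m θstar) ≤ pctl O hO (fun m => fs m θ) := by
  obtain ⟨S, hS, hScard, hpctl⟩ := (isLeast_pctl hO fun m => fs m θ).1
  have sup'_star_le_sup' : ((Sstar.sup' hne (fun m => fs m θstar) : ℝ) : EReal) ≤
      ((S.sup' hS (fun m => fs m θ) : ℝ) : EReal) :=
    calc
      _ ≤ ⨅ θ, ((Sstar.sup' hne (fun m => fs m θ) : ℝ) : EReal) :=
        le_iInf fun θ => EReal.coe_le_coe (hstar θ)
      _ ≤ ⨅ θ, ((S.sup' hS (fun m => fs m θ) : ℝ) : EReal) := hmin S hS hScard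
      _ ≤ _ := iInf_le _ θ
  calc
    _ ≤ Sstar.sup' hne (fun m => fs m θstar) := (isLeast_pctl hO _).2 ⟨Sstar, hne, hcard, rfl⟩
    _ ≤ S.sup' hS (fun m => fs m θ) := EReal.coe_le_coe_iff.mp sup'_star_le_sup'
    _ = _ := hpctl

/-- If S⋆ attains the minimum of inf φ_S over subsets of size M - O,
and φ_{S⋆} attains its infimum at some point, then every global minimizer of
φ_{S⋆} is a global minimizer of the percentile objective φ. -/
theorem stmt_4 (d M O : ℕ) (hO : O < M) (fs : Fin M → (Fin d → ℝ) → ℝ)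
    (Sstar : Finset (Fin M)) (hne : Sstar.Nonempty) (hcard : Sstar.card = M - O)
    (hmin : ∀ (S : Finset (Fin M)) (hS : S.card = M - O),
      (⨅ θ : Fin d → ℝ, ((Sstar.sup' hne (fun m => fs m θ) : ℝ) : EReal)) ≤
        ⨅ θ : Fin d → ℝ,
          ((S.sup' (Finset.card_pos.mp (by rw [hS]; omega)) (fun m => fs m θ) : ℝ) : EReal))
    (hatt : ∃ θ₀ : Fin d → ℝ, ∀ θ, Sstar.sup' hne (fun m => fs m θ₀) ≤
      Sstar.sup' hne (fun m => fs m θ)) :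
    ∀ θstar : Fin d → ℝ,
      (∀ θ, Sstar.sup' hne (fun m => fs m θstar) ≤ Sstar.sup' hne (fun m => fs m θ)) →
      ∀ θ, pctl O hO (fun m => fs m θstar) ≤ pctl O hO (fun m => fs m θ) :=
  stmt_4_general hO fs Sstar hne hcard fun S _ hS => hmin S hS
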